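/- (RLOBPCG convergence: singular vector bound.) Under the same setup as the RLOBPCG singular value bound — A ∈ ℂ^{m×n} of full column rank with singular values σ₁ ≥ … ≥ σ_n > 0, gap := (σ_{n−1}² − σ_n²)/σ_n², S a subspace embedding for A with distortion η < gap/(2+gap), P := VΣ⁻¹ from an SVD SA = UΣV*, v₀ = v_{−1} := P e_n/‖P e_n‖, w_i := P(P*(A*(A v_i) − ‖A v_i‖²·v_i)), and v_{i+1} a unit vector in span{v_{i−1}, v_i, w_i} minimizing ‖Az‖ over unit vectors z in that span — let v_min be a unit right singular vector of A associated with σ_n. Then for every k ≥ 0, |sin∠(v_k, v_min)| ≤ |tan∠(v_k, v_min)| ≤ C^{1/2}·q^{k}, where C := 2η/((1−η)·gap − 2η), q := η + (1−η)/(1+gap), sin²∠(v, v_min) := 1 − |⟨v, v_min⟩|², and tan²∠(v, v_min) := sin²∠(v, v_min)/(1 − sin²∠(v, v_min)). -/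

import Mathlib

/-!
Put `M = A*A`, with eigenvalues `l₁ = σₙ² < l₂ = σₙ₋₁² ≤ …`, and `N = (SA)*(SA)`. The singular
value decomposition gives `PP* = N⁻¹`, so `w = N⁻¹ (M v - ρ v)` is a preconditioned residual of the
current iterate `v` with Rayleigh quotient `ρ = ‖Av‖²`. Because `(1 - η) M ≤ N ≤ (1 + η) M`, the
operator `1 - (1 - η²) N⁻¹ M` has `M`-norm at most `η`, and therefore the vector
`y = v - (1 - η²) w` of the search space lies in the `M`-ball about `ρ M⁻¹ v` of radius
`η ‖v - ρ M⁻¹ v‖_M`.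

By the estimate of Knyazev and Neymeyr the Rayleigh quotient `θ` of any `y` in this ball satisfies
`(θ - l₁) / (l₂ - θ) ≤ q² (ρ - l₁) / (l₂ - ρ)`. An S-procedure proves it: one multiplier for the
ball constraint and one for the definition of `ρ` reduce the claim, coordinate by coordinate in an
eigenbasis of `M`, to the nonnegativity of a cubic on `{l₁} ∪ [l₂, ∞)`.

The initial vector minimizes `‖SAu‖` over unit vectors, so `(1 - η) ρ₀ ≤ (1 + η) l₁`, which bounds
`(ρ₀ - l₁) / (l₂ - ρ₀)` by `C`. Finally `ρ ≥ l₁ cos² + l₂ sin²` gives `tan² ≤ (ρ - l₁) / (l₂ - ρ)`.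
-/

open Matrix

/-- The linear action of a complex matrix on Euclidean space: `mulE A v = A v`. -/
noncomputable def mulE {m n : ℕ} (A : Matrix (Fin m) (Fin n) ℂ)
    (v : EuclideanSpace ℂ (Fin n)) : EuclideanSpace ℂ (Fin m) :=
  Matrix.toEuclideanLin A v

/-- `S` is a subspace embedding for `A` with distortion `η`:
`(1-η)‖Ay‖² ≤ ‖SAy‖² ≤ (1+η)‖Ay‖²` for all `y`. -/
def IsSubspaceEmbedding {d m n : ℕ} (S : Matrix (Fin d) (Fin m) ℂ)
    (A : Matrix (Fin m) (Fin n) ℂ) (η : ℝ) : Prop :=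
  ∀ y : EuclideanSpace ℂ (Fin n),
    (1 - η) * ‖mulE A y‖ ^ 2 ≤ ‖mulE (S * A) y‖ ^ 2 ∧
      ‖mulE (S * A) y‖ ^ 2 ≤ (1 + η) * ‖mulE A y‖ ^ 2

/-- `σ` lists the singular values of `A` in decreasing order: `σ` is antitone, nonnegative,
and there is an orthonormal (eigen)basis `B` with `AᴴA (B i) = σᵢ² • B i`. -/
def HasSingularValues {m n : ℕ} (A : Matrix (Fin m) (Fin n) ℂ) (σ : Fin n → ℝ) : Prop :=
  Antitone σ ∧ (∀ i, 0 ≤ σ i) ∧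
    ∃ B : Fin n → EuclideanSpace ℂ (Fin n), Orthonormal ℂ B ∧
      ∀ i, mulE (Aᴴ * A) (B i) = ((σ i ^ 2 : ℝ) : ℂ) • B i

/-- The spectral norm (largest singular value) of a matrix, as the operator norm of its
action between Euclidean spaces. -/
noncomputable def specNorm {m n : ℕ} (A : Matrix (Fin m) (Fin n) ℂ) : ℝ :=
  ‖LinearMap.toContinuousLinearMap (Matrix.toEuclideanLin A)‖

section RitzError

/-- The error measure of Knyazev and Neymeyr for a Rayleigh quotient `ρ` lying below the second
smallest eigenvalue `l₂` of an operator whose smallest eigenvalue is `l₁`. Preconditioned descent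
contracts it linearly, and it bounds the squared tangent of the angle to the `l₁`-eigenspace. Only
meaningful for `ρ < l₂`. -/
noncomputable def ritzError (l₁ l₂ ρ : ℝ) : ℝ :=
  (ρ - l₁) / (l₂ - ρ)

/-- The factor `q` by which one descent step with a preconditioner of quality `γ` contracts the
square root of `ritzError l₁ l₂`. -/
noncomputable def contractionFactor (l₁ l₂ γ : ℝ) : ℝ :=
  γ + (1 - γ) * (l₁ / l₂)

/-- The affine function of `x` whose sign decides whether a step from Rayleigh quotient `ρ` to `x`
contracts the error by `q²`, where `q` is the `contractionFactor`; see
`ritzError_le_iff_ritzMargin_nonneg`. Being affine, it can be averaged over the spectrum. -/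
noncomputable def ritzMargin (l₁ l₂ γ ρ x : ℝ) : ℝ :=
  contractionFactor l₁ l₂ γ ^ 2 * (ρ - l₁) * (l₂ - x) - (l₂ - ρ) * (x - l₁)

variable {l₁ l₂ ρ γ x : ℝ}

theorem ritzError_le_iff_ritzMargin_nonneg (hρ : ρ < l₂) (hx : x < l₂) :
    ritzError l₁ l₂ x ≤ contractionFactor l₁ l₂ γ ^ 2 * ritzError l₁ l₂ ρ ↔
      0 ≤ ritzMargin l₁ l₂ γ ρ x := by
  rw [ritzError, ritzError, ritzMargin, sub_nonneg, ← mul_div_assoc,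
    div_le_div_iff₀ (sub_pos.2 hx) (sub_pos.2 hρ), mul_comm (x - l₁)]

theorem contractionFactor_nonneg (h₁ : 0 ≤ l₁) (h₂ : 0 ≤ l₂) (hγ₀ : 0 ≤ γ) (hγ₁ : γ ≤ 1) :
    0 ≤ contractionFactor l₁ l₂ γ :=
  add_nonneg hγ₀ (mul_nonneg (sub_nonneg.2 hγ₁) (div_nonneg h₁ h₂))

theorem contractionFactor_le_one (h₂ : 0 < l₂) (h₁₂ : l₁ ≤ l₂) (hγ₁ : γ ≤ 1) :
    contractionFactor l₁ l₂ γ ≤ 1 := by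
  have hle : (1 - γ) * (l₁ / l₂) ≤ 1 - γ :=
    mul_le_of_le_one_right (sub_nonneg.2 hγ₁) ((div_le_one h₂).2 h₁₂)
  rw [contractionFactor]
  linarith

/-- The factor `(1 - l₁ / l₂) * (γ * l₂ + (1 - γ) * ρ)` in the last summand is the one that makes
the cubic vanish at both `x = l₁` and `x = l₂`. -/
theorem ritzMargin_cubic_nonneg (h₁ : 0 < l₁) (h₁₂ : l₁ < l₂) (hρ : l₁ ≤ ρ) (hρ₂ : ρ < l₂)
    (hγ₀ : 0 ≤ γ) (hγ₁ : γ < 1) (hx : x = l₁ ∨ l₂ ≤ x) :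
    0 ≤ l₂ * ρ * ritzMargin l₁ l₂ γ ρ x
      - γ * (l₂ - l₁) * (γ * l₂ + (1 - γ) * x) * (x - ρ) ^ 2
      + (1 - l₁ / l₂) * (γ * l₂ + (1 - γ) * ρ) * x * (γ * l₂ + (1 - γ) * x) * (x - ρ) := by
  have h₂ : 0 < l₂ := h₁.trans h₁₂
  have hq := contractionFactor_nonneg h₁.le h₂.le hγ₀ hγ₁.le
  have factorization : l₂ * ρ * ritzMargin l₁ l₂ γ ρ x
      - γ * (l₂ - l₁) * (γ * l₂ + (1 - γ) * x) * (x - ρ) ^ 2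
      + (1 - l₁ / l₂) * (γ * l₂ + (1 - γ) * ρ) * x * (γ * l₂ + (1 - γ) * x) * (x - ρ)
      = (x - l₁) * (x - l₂) * ((1 - γ) * (1 - l₁ / l₂) * ρ *
          ((1 - γ) * x + (l₂ * contractionFactor l₁ l₂ γ + γ * ρ + (l₂ - ρ)))) := by
    rw [ritzMargin, contractionFactor]
    field_simp
    ring
  rw [factorization]
  rcases hx with rfl | hx
  · simp
  · have hx₁ : 0 ≤ x - l₁ := by linarith
    have : 0 ≤ x - l₂ := by linarith
    have hratio : 0 ≤ 1 - l₁ / l₂ := sub_nonneg.2 ((div_le_one h₂).2 h₁₂.le)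
    have : 0 ≤ 1 - γ := by linarith
    have hlin : 0 ≤ (1 - γ) * x + (l₂ * contractionFactor l₁ l₂ γ + γ * ρ + (l₂ - ρ)) := by
      have : 0 ≤ l₂ - ρ := by linarith
      have : 0 ≤ x := by linarith
      have : 0 ≤ ρ := by linarith
      positivity
    have : 0 ≤ ρ := by linarith
    positivity

theorem ritzMargin_zero_pos (h₁ : 0 < l₁) (h₂ : 0 ≤ l₂) (hρ : l₁ ≤ ρ) (hρ₂ : ρ < l₂) :
    0 < ritzMargin l₁ l₂ γ ρ 0 := by
  have hslope : 0 ≤ contractionFactor l₁ l₂ γ ^ 2 * (ρ - l₁) * l₂ :=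
    mul_nonneg (mul_nonneg (sq_nonneg _) (sub_nonneg.2 hρ)) h₂
  have : 0 < (l₂ - ρ) * l₁ := mul_pos (sub_pos.2 hρ₂) h₁
  rw [ritzMargin]
  linarith

theorem ritzMargin_zero_le (h₂ : 0 < l₂) (h₁₂ : l₁ ≤ l₂) (hρ : l₁ ≤ ρ)
    (hq : 0 ≤ contractionFactor l₁ l₂ γ) (hγ₁ : γ ≤ 1) :
    ritzMargin l₁ l₂ γ ρ 0 ≤ ρ * (l₂ - l₁) := by
  have hq₁ : contractionFactor l₁ l₂ γ ^ 2 ≤ 1 :=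
    pow_le_one₀ hq (contractionFactor_le_one h₂ h₁₂ hγ₁)
  have := mul_le_of_le_one_left (mul_nonneg (sub_nonneg.2 hρ) h₂.le) hq₁
  rw [ritzMargin]
  linarith

/-- Minimizing `α ‖a + γ d‖² + γ β ‖d‖²` over `d`; the weight `α` may be negative. -/
theorem le_mul_norm_add_smul_sq {𝕜 : Type*} [RCLike 𝕜] {α β : ℝ} (hγ : 0 ≤ γ)
    (h : 0 < α * γ + β) (a d : 𝕜) :
    α * β / (α * γ + β) * ‖a‖ ^ 2 ≤ α * ‖a + γ * d‖ ^ 2 + γ * β * ‖d‖ ^ 2 := by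
  have hsq : (α * γ + β) * (α * ‖a + γ * d‖ ^ 2 + γ * β * ‖d‖ ^ 2) - α * β * ‖a‖ ^ 2
      = γ * ‖(α : 𝕜) * a + ((α * γ + β : ℝ) : 𝕜) * d‖ ^ 2 := by
    simp only [← RCLike.normSq_eq_def', RCLike.normSq_apply, map_add RCLike.re,
      map_add RCLike.im, RCLike.re_ofReal_mul, RCLike.im_ofReal_mul]
    ring
  rw [div_mul_eq_mul_div, div_le_iff₀ h, mul_comm _ (α * γ + β), ← sub_nonneg, hsq]
  positivity

theorem exists_ritzMargin_weight (h₁ : 0 < l₁) (h₁₂ : l₁ < l₂) (hρ : l₁ ≤ ρ) (hρ₂ : ρ < l₂)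
    (hγ₀ : 0 ≤ γ) (hγ₁ : γ < 1) :
    ∃ W > 0, ∀ x, l₂ * ritzMargin l₁ l₂ γ ρ x * γ + W * x
      = ritzMargin l₁ l₂ γ ρ 0 * (γ * l₂ + (1 - γ) * x) := by
  have hR := ritzMargin_zero_pos (γ := γ) h₁ (h₁.trans h₁₂).le hρ hρ₂
  refine ⟨γ * l₂ * (l₂ - ρ + contractionFactor l₁ l₂ γ ^ 2 * (ρ - l₁))
    + (1 - γ) * ritzMargin l₁ l₂ γ ρ 0, ?_, fun x => ?_⟩
  · have := h₁.trans h₁₂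
    have := sub_nonneg.2 hρ
    have := sub_pos.2 hρ₂
    have := sub_pos.2 hγ₁
    positivity
  · rw [ritzMargin, ritzMargin]
    ring

/-- S-procedure certificate: `μ` is the multiplier of a ball constraint on `d` and `ν` that of the
equation saying that `ρ` is a Rayleigh quotient, both independent of the spectral point `x`. -/
theorem exists_multipliers_le_ritzMargin (𝕜 : Type*) [RCLike 𝕜] (h₁ : 0 < l₁) (h₁₂ : l₁ < l₂)
    (hρ : l₁ ≤ ρ) (hρ₂ : ρ < l₂) (hγ₀ : 0 ≤ γ) (hγ₁ : γ < 1) :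
    ∃ μ ν : ℝ, 0 ≤ μ ∧ ∀ x, (x = l₁ ∨ l₂ ≤ x) → ∀ z d : 𝕜,
      μ * (x * (x - ρ) ^ 2 * ‖z‖ ^ 2 - x * ‖d‖ ^ 2) + ν * (x ^ 2 * (x - ρ) * ‖z‖ ^ 2)
        ≤ ritzMargin l₁ l₂ γ ρ x * ‖ρ * z + γ * d‖ ^ 2 := by
  have h₂ : 0 < l₂ := h₁.trans h₁₂
  have hq := contractionFactor_nonneg h₁.le h₂.le hγ₀ hγ₁.le
  have hR := ritzMargin_zero_pos (γ := γ) h₁ h₂.le hρ hρ₂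
  have hRρ := ritzMargin_zero_le h₂ h₁₂.le hρ hq hγ₁.le
  obtain ⟨W, hW, hweights⟩ := exists_ritzMargin_weight h₁ h₁₂ hρ hρ₂ hγ₀ hγ₁
  set R := ritzMargin l₁ l₂ γ ρ 0
  set K := (1 - l₁ / l₂) * (γ * l₂ + (1 - γ) * ρ)
  refine ⟨γ * W / l₂, -(W * ρ * K / (l₂ * R)), by positivity, fun x hx z d => ?_⟩
  have hx₀ : 0 < x := by rcases hx with rfl | hx <;> linarith
  have hm : 0 < γ * l₂ + (1 - γ) * x := by
    have := sub_pos.2 hγ₁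
    positivity
  have hcubic := ritzMargin_cubic_nonneg h₁ h₁₂ hρ hρ₂ hγ₀ hγ₁ hx
  specialize hweights x
  set g := ritzMargin l₁ l₂ γ ρ x
  set m := γ * l₂ + (1 - γ) * x
  have hsquare := le_mul_norm_add_smul_sq (α := l₂ * g) (β := W * x) hγ₀
    (by rw [hweights]; positivity) ((ρ : 𝕜) * z) d
  rw [hweights, norm_mul, mul_pow, RCLike.norm_ofReal, sq_abs] at hsquare
  have hscalar : 0 ≤ W * x / (R * m) *
      (ρ * (l₂ * ρ * g - γ * (l₂ - l₁) * m * (x - ρ) ^ 2 + K * x * m * (x - ρ))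
        + γ * m * (ρ * (l₂ - l₁) - R) * (x - ρ) ^ 2) * ‖z‖ ^ 2 := by
    have := h₁.trans_le hρ
    have := sub_nonneg.2 hRρ
    positivity
  refine le_of_mul_le_mul_left ?_ h₂
  calc l₂ * (γ * W / l₂ * (x * (x - ρ) ^ 2 * ‖z‖ ^ 2 - x * ‖d‖ ^ 2)
        + -(W * ρ * K / (l₂ * R)) * (x ^ 2 * (x - ρ) * ‖z‖ ^ 2))
      = l₂ * g * (W * x) / (R * m) * (ρ ^ 2 * ‖z‖ ^ 2) - γ * (W * x) * ‖d‖ ^ 2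
        - W * x / (R * m) *
      (ρ * (l₂ * ρ * g - γ * (l₂ - l₁) * m * (x - ρ) ^ 2 + K * x * m * (x - ρ))
        + γ * m * (ρ * (l₂ - l₁) - R) * (x - ρ) ^ 2) * ‖z‖ ^ 2 := by
        field_simp
        ring
    _ ≤ l₂ * (g * ‖ρ * z + γ * d‖ ^ 2) := by linarith

theorem sum_ritzMargin_nonneg {𝕜 ι : Type*} [RCLike 𝕜] [Fintype ι] (h₁ : 0 < l₁) (h₁₂ : l₁ < l₂)
    (hρ : l₁ ≤ ρ) (hρ₂ : ρ < l₂) (hγ₀ : 0 ≤ γ) (hγ₁ : γ < 1) {lam : ι → ℝ}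
    (hlam : ∀ i, lam i = l₁ ∨ l₂ ≤ lam i) {z d : ι → 𝕜}
    (hz : ∑ i, lam i ^ 2 * (lam i - ρ) * ‖z i‖ ^ 2 = 0)
    (hd : ∑ i, lam i * ‖d i‖ ^ 2 ≤ ∑ i, lam i * (lam i - ρ) ^ 2 * ‖z i‖ ^ 2) :
    0 ≤ ∑ i, ritzMargin l₁ l₂ γ ρ (lam i) * ‖ρ * z i + γ * d i‖ ^ 2 := by
  obtain ⟨μ, ν, hμ, hle⟩ := exists_multipliers_le_ritzMargin 𝕜 h₁ h₁₂ hρ hρ₂ hγ₀ hγ₁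
  refine le_trans ?_ (Finset.sum_le_sum fun i _ => hle (lam i) (hlam i) (z i) (d i))
  rw [Finset.sum_add_distrib, ← Finset.mul_sum, ← Finset.mul_sum, Finset.sum_sub_distrib, hz,
    mul_zero, add_zero]
  exact mul_nonneg hμ (sub_nonneg.2 hd)

theorem lt_of_sketch_bound {gap η : ℝ} (h₁ : 0 < l₁) (hη₁ : η < 1)
    (hgap : 0 < (1 - η) * gap - 2 * η) (hρ : (1 - η) * ρ ≤ (1 + η) * l₁) :
    ρ < (1 + gap) * l₁ := by
  refine lt_of_mul_lt_mul_left (hρ.trans_lt ?_) (sub_nonneg.2 hη₁.le)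
  linear_combination mul_pos hgap h₁

theorem ritzError_le_of_sketch_bound {gap η : ℝ} (h₁ : 0 < l₁) (hη₁ : η < 1) (hgap₀ : 0 ≤ gap)
    (hgap : 0 < (1 - η) * gap - 2 * η) (hρ : (1 - η) * ρ ≤ (1 + η) * l₁) :
    ritzError l₁ ((1 + gap) * l₁) ρ ≤ 2 * η / ((1 - η) * gap - 2 * η) := by
  rw [ritzError, div_le_div_iff₀ (sub_pos.2 (lt_of_sketch_bound h₁ hη₁ hgap hρ)) hgap]
  linear_combination gap * hρ

theorem contractionFactor_one_add_gap_mul {gap : ℝ} (h₁ : l₁ ≠ 0) :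
    contractionFactor l₁ ((1 + gap) * l₁) γ = γ + (1 - γ) / (1 + gap) := by
  rw [contractionFactor, div_mul_cancel_right₀ h₁, div_eq_mul_inv]

/-- With `c = cos²` of an angle the hypothesis is the lower bound of the Rayleigh quotient by the
corresponding convex combination of `l₁` and `l₂`. -/
theorem one_sub_div_le_ritzError {c : ℝ} (h₁₂ : l₁ < l₂) (hρ₂ : ρ < l₂)
    (hρ : l₁ * c + l₂ * (1 - c) ≤ ρ) : 0 < c ∧ (1 - c) / c ≤ ritzError l₁ l₂ ρ := by
  have hc : 0 < c := by nlinarith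
  refine ⟨hc, ?_⟩
  rw [ritzError, div_le_div_iff₀ hc (sub_pos.2 hρ₂)]
  nlinarith

end RitzError

section NormDistortion

open scoped InnerProductSpace

variable {𝕜 E F G : Type*} [RCLike 𝕜] [AddCommGroup E] [Module 𝕜 E]
  [NormedAddCommGroup F] [InnerProductSpace 𝕜 F] [NormedAddCommGroup G] [InnerProductSpace 𝕜 G]

/-- `‖B u‖²` reproduces `‖A u‖²` up to the relative error `η`. For `B = S A` this says that `S` is a
subspace embedding for `A` with distortion `η`; no norm on the domain is involved. -/
def HasNormDistortion (A : E →ₗ[𝕜] F) (B : E →ₗ[𝕜] G) (η : ℝ) : Prop :=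
  ∀ u, (1 - η) * ‖A u‖ ^ 2 ≤ ‖B u‖ ^ 2 ∧ ‖B u‖ ^ 2 ≤ (1 + η) * ‖A u‖ ^ 2

namespace HasNormDistortion

variable {A : E →ₗ[𝕜] F} {B : E →ₗ[𝕜] G} {η : ℝ}

theorem map_eq_zero_left (h : HasNormDistortion A B η) (hη₁ : η < 1) {u : E} (hu : B u = 0) :
    A u = 0 := by
  have hle := (h u).1
  rw [hu, norm_zero, zero_pow two_ne_zero] at hle
  exact norm_eq_zero.1 (pow_eq_zero_iff two_ne_zero |>.1
    (le_antisymm (nonpos_of_mul_nonpos_right hle (sub_pos.2 hη₁)) (sq_nonneg _)))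

theorem map_eq_zero_right (h : HasNormDistortion A B η) {u : E} (hu : A u = 0) : B u = 0 := by
  simpa [hu] using (h u).2

/-- Polarization of the form `‖B u‖² - ‖A u‖²`. -/
theorem re_inner_le_add_norm_sq (h : HasNormDistortion A B η) (u w : E) :
    RCLike.re ⟪B u, B w⟫_𝕜 ≤
      RCLike.re ⟪A u, A w⟫_𝕜 + η / 2 * (‖A u‖ ^ 2 + ‖A w‖ ^ 2) := by
  have hadd := (h (u + w)).2
  have hsub := (h (u - w)).1
  rw [map_add, map_add, @norm_add_sq 𝕜, @norm_add_sq 𝕜] at hadd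
  rw [map_sub, map_sub, @norm_sub_sq 𝕜, @norm_sub_sq 𝕜] at hsub
  linarith

theorem re_inner_le (h : HasNormDistortion A B η) (u w : E) :
    RCLike.re ⟪B u, B w⟫_𝕜 ≤ RCLike.re ⟪A u, A w⟫_𝕜 + η * (‖A u‖ * ‖A w‖) := by
  rcases eq_or_ne (A u) 0 with hu | hu
  · simp [hu, h.map_eq_zero_right hu]
  rcases eq_or_ne (A w) 0 with hw | hw
  · simp [hw, h.map_eq_zero_right hw]
  have hu₀ : 0 < ‖A u‖ := norm_pos_iff.2 hu
  have hw₀ : 0 < ‖A w‖ := norm_pos_iff.2 hw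
  -- Both vectors are rescaled to the common length `‖A u‖ * ‖A w‖`.
  have hscaled := h.re_inner_le_add_norm_sq ((‖A w‖ : 𝕜) • u) ((‖A u‖ : 𝕜) • w)
  simp only [map_smul, inner_smul_left, inner_smul_right, norm_smul, RCLike.conj_ofReal,
    RCLike.re_ofReal_mul, RCLike.norm_ofReal, abs_norm] at hscaled
  refine le_of_mul_le_mul_left ?_ (mul_pos hu₀ hw₀)
  linarith

/-- Here `w = (B*B)⁻¹ (A*A) f`, so the preconditioner `(1 - η²) (B*B)⁻¹` has quality `η`. -/
theorem norm_map_sub_smul_le (h : HasNormDistortion A B η) (hη₀ : 0 ≤ η) (hη₁ : η ≤ 1) {f w : E}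
    (hfw : ∀ u, ⟪B u, B w⟫_𝕜 = ⟪A u, A f⟫_𝕜) :
    ‖A (f - ((1 - η ^ 2 : ℝ) : 𝕜) • w)‖ ≤ η * ‖A f‖ := by
  obtain ⟨u, rfl⟩ : ∃ u, f = u + w := ⟨f - w, by abel⟩
  have hu : ‖A u‖ ≤ η * ‖A w‖ := by
    have hre := h.re_inner_le u w
    rw [hfw, map_add, inner_add_right, map_add, inner_self_eq_norm_sq] at hre
    rcases (norm_nonneg (A u)).eq_or_lt with h₀ | h₀
    · rw [← h₀]
      positivity
    · refine le_of_mul_le_mul_left ?_ h₀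
      linarith
  have hstep : u + w - ((1 - η ^ 2 : ℝ) : 𝕜) • w = u + ((η ^ 2 : ℝ) : 𝕜) • w := by
    push_cast
    module
  have hsq := mul_le_mul_of_nonneg_left (pow_le_pow_left₀ (norm_nonneg _) hu 2)
    (sub_nonneg.2 (pow_le_one₀ (n := 2) hη₀ hη₁))
  refine le_of_sq_le_sq ?_ (by positivity)
  rw [hstep, mul_pow, map_add, map_add, map_smul, @norm_add_sq 𝕜, @norm_add_sq 𝕜, inner_smul_right,
    RCLike.re_ofReal_mul, norm_smul, RCLike.norm_ofReal, mul_pow, sq_abs]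
  linarith

end HasNormDistortion

theorem exists_smul_eq_of_norm_map_le {A : E →ₗ[𝕜] F} (hA : Function.Injective A) {v f : E} {γ : ℝ}
    (hγ : 0 ≤ γ) (hv : ‖A v‖ ≤ γ * ‖A f‖) : ∃ d, v = (γ : 𝕜) • d ∧ ‖A d‖ ≤ ‖A f‖ := by
  rcases hγ.eq_or_lt with rfl | hγ
  · have hAv : A v = 0 := norm_le_zero_iff.1 (hv.trans_eq (zero_mul _))
    exact ⟨0, by rw [smul_zero, (map_eq_zero_iff A hA).1 hAv], by simp⟩
  · refine ⟨(γ : 𝕜)⁻¹ • v, (smul_inv_smul₀ (RCLike.ofReal_ne_zero.2 hγ.ne') v).symm, ?_⟩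
    rw [map_smul, norm_smul, norm_inv, RCLike.norm_ofReal, abs_of_pos hγ]
    exact (inv_mul_le_iff₀ hγ).2 hv

/-- `w` is the eigenvalue residual `A*A x - ‖A x‖² x` of `x` preconditioned by `(B*B)⁻¹`, in weak
form, so that no adjoint or inverse is needed. -/
def IsPreconditionedResidual {E : Type*} [NormedAddCommGroup E] [InnerProductSpace 𝕜 E]
    (A : E →ₗ[𝕜] F) (B : E →ₗ[𝕜] G) (x w : E) : Prop :=
  ∀ u, ⟪B u, B w⟫_𝕜 = ⟪A u, A x⟫_𝕜 - ((‖A x‖ ^ 2 : ℝ) : 𝕜) * ⟪u, x⟫_𝕜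

theorem IsPreconditionedResidual.sub_smul_ne_zero {E : Type*} [NormedAddCommGroup E]
    [InnerProductSpace 𝕜 E] {A : E →ₗ[𝕜] F} {B : E →ₗ[𝕜] G} {x w : E}
    (h : IsPreconditionedResidual A B x w) (hx : ‖x‖ = 1) (hBx : B x ≠ 0) (t : 𝕜) :
    x - t • w ≠ 0 := by
  intro hzero
  have hortho : ⟪B x, B w⟫_𝕜 = 0 := by
    rw [h x, inner_self_eq_norm_sq_to_K, inner_self_eq_norm_sq_to_K, hx]
    simp
  refine hBx (inner_self_eq_zero (𝕜 := 𝕜) |>.1 ?_)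
  rw [sub_eq_zero] at hzero
  nth_rw 2 [hzero]
  rw [map_smul, inner_smul_right, hortho, mul_zero]

end NormDistortion

section SingularBasis

open scoped InnerProductSpace

variable {𝕜 ι E F G : Type*} [RCLike 𝕜] [Fintype ι] [NormedAddCommGroup E] [InnerProductSpace 𝕜 E]
  [NormedAddCommGroup F] [InnerProductSpace 𝕜 F] [NormedAddCommGroup G] [InnerProductSpace 𝕜 G]

/-- `b` consists of right singular vectors of `A`, with squared singular values `lam`: the equation
`A*A (b i) = lam i • b i` in weak form, so that no adjoint is needed. -/
def IsRightSingularBasis (A : E →ₗ[𝕜] F) (b : OrthonormalBasis ι 𝕜 E) (lam : ι → ℝ) : Prop :=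
  ∀ i u, ⟪A (b i), A u⟫_𝕜 = lam i * ⟪b i, u⟫_𝕜

namespace IsRightSingularBasis

variable {A : E →ₗ[𝕜] F} {B : E →ₗ[𝕜] G} {b : OrthonormalBasis ι 𝕜 E} {lam : ι → ℝ}

theorem inner_map_map (hb : IsRightSingularBasis A b lam) (u v : E) :
    ⟪A u, A v⟫_𝕜 = ∑ i, lam i * (⟪u, b i⟫_𝕜 * ⟪b i, v⟫_𝕜) := by
  conv_lhs => rw [← b.sum_repr' u]
  simp only [map_sum, map_smul, sum_inner, inner_smul_left, inner_conj_symm, hb _ v]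
  exact Finset.sum_congr rfl fun i _ => mul_left_comm _ _ _

theorem norm_map_sq (hb : IsRightSingularBasis A b lam) (u : E) :
    ‖A u‖ ^ 2 = ∑ i, lam i * ‖⟪b i, u⟫_𝕜‖ ^ 2 := by
  rw [← inner_self_eq_norm_sq (𝕜 := 𝕜), hb.inner_map_map, map_sum]
  refine Finset.sum_congr rfl fun i _ => ?_
  rw [RCLike.re_ofReal_mul, inner_mul_symm_re_eq_norm, norm_mul, norm_inner_symm, sq]

theorem mul_norm_sq_le (hb : IsRightSingularBasis A b lam) {l : ℝ} (hl : ∀ i, l ≤ lam i) (u : E) :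
    l * ‖u‖ ^ 2 ≤ ‖A u‖ ^ 2 := by
  rw [hb.norm_map_sq, ← b.sum_sq_norm_inner_right u, Finset.mul_sum]
  gcongr with i
  exact hl i

theorem injective (hb : IsRightSingularBasis A b lam) (hlam : ∀ i, 0 < lam i) :
    Function.Injective A := by
  refine (injective_iff_map_eq_zero A).2 fun u hu => b.toBasis.ext_elem fun i => ?_
  have h := hb i u
  rw [hu, inner_zero_right, eq_comm, mul_eq_zero, RCLike.ofReal_eq_zero] at h
  simpa [b.repr_apply_apply] using h.resolve_left (hlam i).ne'

theorem exists_forall_inner_map_eq (hb : IsRightSingularBasis A b lam) (hlam : ∀ i, lam i ≠ 0)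
    (x : E) : ∃ z, ∀ u, ⟪A u, A z⟫_𝕜 = ⟪u, x⟫_𝕜 := by
  refine ⟨∑ k, ((lam k : 𝕜)⁻¹ * ⟪b k, x⟫_𝕜) • b k, fun u => ?_⟩
  rw [hb.inner_map_map, ← b.sum_inner_mul_inner u x]
  refine Finset.sum_congr rfl fun i _ => ?_
  rw [b.orthonormal.inner_right_fintype, mul_left_comm,
    mul_inv_cancel_left₀ (RCLike.ofReal_ne_zero.2 (hlam i))]

theorem norm_inner_eq_of_eigenvector (hb : IsRightSingularBasis A b lam) {j : ι}
    (hj : ∀ i, i ≠ j → lam i ≠ lam j) {u : E} (hu : ‖u‖ = 1)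
    (heig : ∀ y, ⟪A y, A u⟫_𝕜 = lam j * ⟪y, u⟫_𝕜) (x : E) :
    ‖⟪x, u⟫_𝕜‖ = ‖⟪b j, x⟫_𝕜‖ := by
  have hcoord (i : ι) (hi : i ≠ j) : ⟪b i, u⟫_𝕜 = 0 := by
    have h := (hb i u).symm.trans (heig (b i))
    rw [← sub_eq_zero, ← sub_mul, ← RCLike.ofReal_sub, mul_eq_zero, RCLike.ofReal_eq_zero] at h
    exact h.resolve_left (sub_ne_zero.2 (hj i hi))
  have hu_eq : u = ⟪b j, u⟫_𝕜 • b j := by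
    conv_lhs => rw [← b.sum_repr' u]
    exact Finset.sum_eq_single j (fun i _ hi => by rw [hcoord i hi, zero_smul]) (by simp)
  have hphase : ‖⟪b j, u⟫_𝕜‖ = 1 := by
    rw [hu_eq, norm_smul, b.norm_eq_one, mul_one] at hu
    exact hu
  rw [hu_eq, inner_smul_right, norm_mul, hphase, one_mul, norm_inner_symm]

theorem convex_combination_le (hb : IsRightSingularBasis A b lam) {l₂ : ℝ} {j : ι}
    (hl₂ : ∀ i, i ≠ j → l₂ ≤ lam i) {x : E} (hx : ‖x‖ = 1) :
    lam j * ‖⟪b j, x⟫_𝕜‖ ^ 2 + l₂ * (1 - ‖⟪b j, x⟫_𝕜‖ ^ 2) ≤ ‖A x‖ ^ 2 := by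
  classical
  have hsum := b.sum_sq_norm_inner_right x
  rw [hx, one_pow, ← Finset.add_sum_erase _ _ (Finset.mem_univ j)] at hsum
  rw [hb.norm_map_sq, ← Finset.add_sum_erase _ _ (Finset.mem_univ j), ← hsum, add_sub_cancel_left,
    Finset.mul_sum]
  gcongr with i hi
  exact hl₂ i (Finset.ne_of_mem_erase hi)

theorem sum_ritzMargin (hb : IsRightSingularBasis A b lam) (l₁ l₂ γ ρ : ℝ) (y : E) :
    ∑ i, ritzMargin l₁ l₂ γ ρ (lam i) * ‖⟪b i, y⟫_𝕜‖ ^ 2 =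
      contractionFactor l₁ l₂ γ ^ 2 * (ρ - l₁) * (l₂ * ‖y‖ ^ 2 - ‖A y‖ ^ 2)
        - (l₂ - ρ) * (‖A y‖ ^ 2 - l₁ * ‖y‖ ^ 2) := by
  rw [hb.norm_map_sq, ← b.sum_sq_norm_inner_right y]
  simp only [Finset.mul_sum, ← Finset.sum_sub_distrib]
  refine Finset.sum_congr rfl fun i _ => ?_
  rw [ritzMargin]
  ring

variable {l₁ l₂ η : ℝ} {x w : E}

/-- The fixed-step iterate lies in the `A`-norm ball of radius `η ‖A (x - ρ z)‖` about `ρ z`, where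
`z = (A*A)⁻¹ x` and `ρ = ‖A x‖²`. -/
theorem exists_step_eq (hb : IsRightSingularBasis A b lam) (hlam : ∀ i, 0 < lam i)
    (hB : HasNormDistortion A B η) (hη₀ : 0 ≤ η) (hη₁ : η ≤ 1)
    (hw : IsPreconditionedResidual A B x w) :
    ∃ z d, (∀ i, ⟪b i, x⟫_𝕜 = lam i * ⟪b i, z⟫_𝕜) ∧
      x - ((1 - η ^ 2 : ℝ) : 𝕜) • w = ((‖A x‖ ^ 2 : ℝ) : 𝕜) • z + (η : 𝕜) • d ∧
      ‖A d‖ ≤ ‖A (x - ((‖A x‖ ^ 2 : ℝ) : 𝕜) • z)‖ := by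
  obtain ⟨z, hz⟩ := hb.exists_forall_inner_map_eq (fun i => (hlam i).ne') x
  have hf (u : E) : ⟪B u, B w⟫_𝕜 = ⟪A u, A (x - ((‖A x‖ ^ 2 : ℝ) : 𝕜) • z)⟫_𝕜 := by
    rw [hw u, map_sub, map_smul, inner_sub_right, inner_smul_right, hz]
  obtain ⟨d, hd, hdle⟩ := exists_smul_eq_of_norm_map_le (hb.injective hlam) hη₀
    (hB.norm_map_sub_smul_le hη₀ hη₁ hf)
  refine ⟨z, d, fun i => (hz (b i)).symm.trans (hb i z), ?_, hdle⟩
  rw [← hd]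
  abel

/-- The witness is the fixed-step iterate `x - (1 - η²) w`. -/
theorem exists_mem_span_sum_ritzMargin_nonneg (hb : IsRightSingularBasis A b lam) (h₁ : 0 < l₁)
    (h₁₂ : l₁ < l₂) (hlam : ∀ i, lam i = l₁ ∨ l₂ ≤ lam i) (hB : HasNormDistortion A B η)
    (hη₀ : 0 ≤ η) (hη₁ : η < 1) (hw : IsPreconditionedResidual A B x w) (hx : ‖x‖ = 1)
    (hρ₂ : ‖A x‖ ^ 2 < l₂) :
    ∃ y ∈ Submodule.span 𝕜 {x, w}, y ≠ 0 ∧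
      0 ≤ ∑ i, ritzMargin l₁ l₂ η (‖A x‖ ^ 2) (lam i) * ‖⟪b i, y⟫_𝕜‖ ^ 2 := by
  have hl₁ (i : ι) : l₁ ≤ lam i := (hlam i).elim Eq.ge h₁₂.le.trans
  have hpos (i : ι) : 0 < lam i := h₁.trans_le (hl₁ i)
  have hρ : l₁ ≤ ‖A x‖ ^ 2 := by simpa [hx] using hb.mul_norm_sq_le hl₁ x
  have hx₀ : x ≠ 0 := norm_ne_zero_iff.1 (hx ▸ one_ne_zero)
  have hBx : B x ≠ 0 := fun h =>
    hx₀ ((map_eq_zero_iff A (hb.injective hpos)).1 (hB.map_eq_zero_left hη₁ h))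
  obtain ⟨z, d, hxz, hstep, hd⟩ := hb.exists_step_eq hpos hB hη₀ hη₁.le hw
  refine ⟨x - ((1 - η ^ 2 : ℝ) : 𝕜) • w, ?_, hw.sub_smul_ne_zero hx hBx _, ?_⟩
  · exact sub_mem (Submodule.subset_span (by simp))
      (Submodule.smul_mem _ _ (Submodule.subset_span (by simp)))
  have hx_sq := hb.norm_map_sq x
  have hx_one := b.sum_sq_norm_inner_right x
  have hd_sq := pow_le_pow_left₀ (norm_nonneg _) hd 2
  rw [hb.norm_map_sq, hb.norm_map_sq (x - _)] at hd_sq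
  rw [hstep]
  set ρ := ‖A x‖ ^ 2
  simp only [inner_add_right, inner_sub_right, inner_smul_right, hxz, ← sub_mul,
    ← RCLike.ofReal_sub, norm_mul, RCLike.norm_ofReal, mul_pow, sq_abs] at hx_sq hx_one hd_sq ⊢
  refine sum_ritzMargin_nonneg h₁ h₁₂ hρ hρ₂ hη₀ hη₁ hlam ?_ ?_
  · calc ∑ i, lam i ^ 2 * (lam i - ρ) * ‖⟪b i, z⟫_𝕜‖ ^ 2
        = ∑ i, lam i * (lam i ^ 2 * ‖⟪b i, z⟫_𝕜‖ ^ 2)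
          - ρ * ∑ i, lam i ^ 2 * ‖⟪b i, z⟫_𝕜‖ ^ 2 := by
          rw [Finset.mul_sum, ← Finset.sum_sub_distrib]
          exact Finset.sum_congr rfl fun i _ => by ring
      _ = 0 := by rw [← hx_sq, hx_one, hx, one_pow, mul_one, sub_self]
  · simpa only [mul_assoc] using hd_sq

theorem ritzError_le_of_forall_le (hb : IsRightSingularBasis A b lam) (h₁ : 0 < l₁)
    (h₁₂ : l₁ < l₂) (hlam : ∀ i, lam i = l₁ ∨ l₂ ≤ lam i) (hB : HasNormDistortion A B η)
    (hη₀ : 0 ≤ η) (hη₁ : η < 1) (hw : IsPreconditionedResidual A B x w) (hx : ‖x‖ = 1)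
    (hρ₂ : ‖A x‖ ^ 2 < l₂) {r : ℝ} (hr : 0 ≤ r)
    (hmin : ∀ y ∈ Submodule.span 𝕜 {x, w}, ‖y‖ = 1 → r ≤ ‖A y‖) :
    ritzError l₁ l₂ (r ^ 2) ≤ contractionFactor l₁ l₂ η ^ 2 * ritzError l₁ l₂ (‖A x‖ ^ 2) := by
  obtain ⟨y, hy_mem, hy₀, hy⟩ := hb.exists_mem_span_sum_ritzMargin_nonneg h₁ h₁₂ hlam hB hη₀ hη₁
    hw hx hρ₂
  have hl₁ (i : ι) : l₁ ≤ lam i := (hlam i).elim Eq.ge h₁₂.le.trans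
  have hρ : l₁ ≤ ‖A x‖ ^ 2 := by simpa [hx] using hb.mul_norm_sq_le hl₁ x
  have hrx : r ^ 2 ≤ ‖A x‖ ^ 2 :=
    pow_le_pow_left₀ hr (hmin x (Submodule.subset_span (by simp)) hx) 2
  have hy_pos : 0 < ‖y‖ := norm_pos_iff.2 hy₀
  have hry : r ^ 2 * ‖y‖ ^ 2 ≤ ‖A y‖ ^ 2 := by
    have h := hmin (((‖y‖⁻¹ : ℝ) : 𝕜) • y) (Submodule.smul_mem _ _ hy_mem)
      (by rw [norm_smul, RCLike.norm_ofReal, abs_inv, abs_norm, inv_mul_cancel₀ hy_pos.ne'])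
    rw [map_smul, norm_smul, RCLike.norm_ofReal, abs_inv, abs_norm, le_inv_mul_iff₀ hy_pos,
      mul_comm] at h
    rw [← mul_pow]
    exact pow_le_pow_left₀ (by positivity) h 2
  rw [ritzError_le_iff_ritzMargin_nonneg hρ₂ (hrx.trans_lt hρ₂)]
  refine nonneg_of_mul_nonneg_left (hy.trans ?_) (pow_pos hy_pos 2)
  rw [hb.sum_ritzMargin, ritzMargin]
  have hslope : 0 ≤ contractionFactor l₁ l₂ η ^ 2 * (‖A x‖ ^ 2 - l₁) + (l₂ - ‖A x‖ ^ 2) := by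
    have := sub_nonneg.2 hρ
    have := sub_nonneg.2 hρ₂.le
    positivity
  linear_combination mul_le_mul_of_nonneg_left hry hslope

theorem ritzError_iterate_le (hb : IsRightSingularBasis A b lam) (h₁ : 0 < l₁)
    (h₁₂ : l₁ < l₂) (hlam : ∀ i, lam i = l₁ ∨ l₂ ≤ lam i) (hB : HasNormDistortion A B η)
    (hη₀ : 0 ≤ η) (hη₁ : η < 1) {v w : ℕ → E} (hv : ∀ k, ‖v k‖ = 1)
    (hw : ∀ k, IsPreconditionedResidual A B (v k) (w k))
    (hmin : ∀ k, ∀ y ∈ Submodule.span 𝕜 {v k, w k}, ‖y‖ = 1 → ‖A (v (k + 1))‖ ≤ ‖A y‖)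
    (h₀ : ‖A (v 0)‖ ^ 2 < l₂) (k : ℕ) :
    ‖A (v k)‖ ^ 2 < l₂ ∧ ritzError l₁ l₂ (‖A (v k)‖ ^ 2)
      ≤ (contractionFactor l₁ l₂ η ^ k) ^ 2 * ritzError l₁ l₂ (‖A (v 0)‖ ^ 2) := by
  induction k with
  | zero => simpa using h₀
  | succ k ih =>
    have hdecr : ‖A (v (k + 1))‖ ^ 2 ≤ ‖A (v k)‖ ^ 2 := pow_le_pow_left₀ (norm_nonneg _)
      (hmin k (v k) (Submodule.subset_span (by simp)) (hv k)) 2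
    refine ⟨hdecr.trans_lt ih.1, ?_⟩
    calc ritzError l₁ l₂ (‖A (v (k + 1))‖ ^ 2)
        ≤ contractionFactor l₁ l₂ η ^ 2 * ritzError l₁ l₂ (‖A (v k)‖ ^ 2) :=
          hb.ritzError_le_of_forall_le h₁ h₁₂ hlam hB hη₀ hη₁ (hw k) (hv k) ih.1
            (norm_nonneg _) (hmin k)
      _ ≤ contractionFactor l₁ l₂ η ^ 2 *
          ((contractionFactor l₁ l₂ η ^ k) ^ 2 * ritzError l₁ l₂ (‖A (v 0)‖ ^ 2)) :=
          mul_le_mul_of_nonneg_left ih.2 (sq_nonneg _)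
      _ = (contractionFactor l₁ l₂ η ^ (k + 1)) ^ 2 * ritzError l₁ l₂ (‖A (v 0)‖ ^ 2) := by ring

theorem tan_sq_le (hb : IsRightSingularBasis A b lam) {j : ι} (hj : 0 < lam j) {gap : ℝ}
    (hgap : 0 < (1 - η) * gap - 2 * η) (hlam : ∀ i, i ≠ j → (1 + gap) * lam j ≤ lam i)
    (hB : HasNormDistortion A B η) (hη₀ : 0 ≤ η) (hη₁ : η < 1) {v w : ℕ → E}
    (hv : ∀ k, ‖v k‖ = 1) (hv₀ : ∀ u, ‖u‖ = 1 → ‖B (v 0)‖ ≤ ‖B u‖)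
    (hw : ∀ k, IsPreconditionedResidual A B (v k) (w k))
    (hmin : ∀ k, ∀ y ∈ Submodule.span 𝕜 {v k, w k}, ‖y‖ = 1 → ‖A (v (k + 1))‖ ≤ ‖A y‖)
    {u : E} (hu : ‖u‖ = 1) (heig : ∀ y, ⟪A y, A u⟫_𝕜 = lam j * ⟪y, u⟫_𝕜) (k : ℕ) :
    0 < ‖⟪v k, u⟫_𝕜‖ ^ 2 ∧ (1 - ‖⟪v k, u⟫_𝕜‖ ^ 2) / ‖⟪v k, u⟫_𝕜‖ ^ 2 ≤
      2 * η / ((1 - η) * gap - 2 * η) * ((η + (1 - η) / (1 + gap)) ^ k) ^ 2 := by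
  have hgap₀ : 0 < gap := by
    refine pos_of_mul_pos_right (?_ : 0 < (1 - η) * gap) (sub_nonneg.2 hη₁.le)
    linarith
  have hlt : lam j < (1 + gap) * lam j := lt_mul_of_one_lt_left hj (by linarith)
  have hdich (i : ι) : lam i = lam j ∨ (1 + gap) * lam j ≤ lam i :=
    (eq_or_ne i j).imp (congrArg lam) (hlam i)
  have hstart : (1 - η) * ‖A (v 0)‖ ^ 2 ≤ (1 + η) * lam j := by
    have hAu : ‖A u‖ ^ 2 = lam j := by
      rw [← inner_self_eq_norm_sq (𝕜 := 𝕜), heig, RCLike.re_ofReal_mul, inner_self_eq_norm_sq, hu,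
        one_pow, mul_one]
    calc (1 - η) * ‖A (v 0)‖ ^ 2 ≤ ‖B (v 0)‖ ^ 2 := (hB _).1
      _ ≤ ‖B u‖ ^ 2 := pow_le_pow_left₀ (norm_nonneg _) (hv₀ u hu) 2
      _ ≤ (1 + η) * lam j := hAu ▸ (hB u).2
  obtain ⟨hk, herr⟩ := hb.ritzError_iterate_le hj hlt hdich hB hη₀ hη₁ hv hw hmin
    (lt_of_sketch_bound hj hη₁ hgap hstart) k
  have hangle := hb.convex_combination_le hlam (hv k)
  rw [← hb.norm_inner_eq_of_eigenvector (fun i hi => (hlt.trans_le (hlam i hi)).ne') hu heig]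
    at hangle
  obtain ⟨hcos, htan⟩ := one_sub_div_le_ritzError hlt hk hangle
  refine ⟨hcos, htan.trans (herr.trans ?_)⟩
  rw [contractionFactor_one_add_gap_mul hj.ne', mul_comm]
  exact mul_le_mul_of_nonneg_right (ritzError_le_of_sketch_bound hj hη₁ hgap₀.le hgap hstart)
    (sq_nonneg _)

end IsRightSingularBasis

end SingularBasis

section MatrixAction

variable {l m n : ℕ}

theorem mulE_mul (A : Matrix (Fin l) (Fin m) ℂ) (B : Matrix (Fin m) (Fin n) ℂ)
    (v : EuclideanSpace ℂ (Fin n)) : mulE (A * B) v = mulE A (mulE B v) := by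
  simp only [mulE, toLpLin_mul_same, LinearMap.comp_apply]

theorem mulE_one (v : EuclideanSpace ℂ (Fin n)) : mulE 1 v = v := by
  simp only [mulE, toLpLin_one, LinearMap.id_apply]

theorem mulE_smul (A : Matrix (Fin m) (Fin n) ℂ) (c : ℂ) (v : EuclideanSpace ℂ (Fin n)) :
    mulE A (c • v) = c • mulE A v :=
  map_smul (toEuclideanLin A) c v

theorem inner_mulE_left (A : Matrix (Fin m) (Fin n) ℂ) (u : EuclideanSpace ℂ (Fin n))
    (w : EuclideanSpace ℂ (Fin m)) : inner ℂ (mulE A u) w = inner ℂ u (mulE Aᴴ w) := by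
  rw [mulE, mulE, toEuclideanLin_conjTranspose_eq_adjoint, LinearMap.adjoint_inner_right]

theorem inner_mulE_mulE (A : Matrix (Fin m) (Fin n) ℂ) (u v : EuclideanSpace ℂ (Fin n)) :
    inner ℂ (mulE A u) (mulE A v) = inner ℂ u (mulE (Aᴴ * A) v) := by
  rw [inner_mulE_left, mulE_mul]

theorem norm_mulE_of_conjTranspose_mul_self {U : Matrix (Fin m) (Fin n) ℂ} (hU : Uᴴ * U = 1)
    (u : EuclideanSpace ℂ (Fin n)) : ‖mulE U u‖ = ‖u‖ := by
  rw [@norm_eq_sqrt_re_inner ℂ, @norm_eq_sqrt_re_inner ℂ _ _ _ _ u, inner_mulE_mulE, hU, mulE_one]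

theorem mulE_diagonal_apply (g : Fin n → ℂ) (u : EuclideanSpace ℂ (Fin n)) (i : Fin n) :
    mulE (diagonal g) u i = g i * u i := by
  simp only [mulE, toLpLin_apply, mulVec_diagonal]

theorem mulE_diagonal_single (g : Fin n → ℂ) (i : Fin n) :
    mulE (diagonal g) (EuclideanSpace.single i 1) = g i • EuclideanSpace.single i (1 : ℂ) := by
  ext k
  rw [mulE_diagonal_apply]
  rcases eq_or_ne k i with rfl | hk
  · simp
  · simp [hk]

theorem inner_mulE_mulE_of_eigenvector {A : Matrix (Fin m) (Fin n) ℂ} {lam : ℝ}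
    {x : EuclideanSpace ℂ (Fin n)} (hx : mulE (Aᴴ * A) x = (lam : ℂ) • x)
    (y : EuclideanSpace ℂ (Fin n)) :
    inner ℂ (mulE A y) (mulE A x) = lam * inner ℂ y x := by
  rw [inner_mulE_mulE, hx, inner_smul_right]

theorem HasSingularValues.exists_isRightSingularBasis {A : Matrix (Fin m) (Fin n) ℂ}
    {σ : Fin n → ℝ} (hσ : HasSingularValues A σ) :
    ∃ b : OrthonormalBasis (Fin n) ℂ (EuclideanSpace ℂ (Fin n)),
      IsRightSingularBasis (toEuclideanLin A) b (fun i => σ i ^ 2) := by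
  obtain ⟨-, -, B, hB, heig⟩ := hσ
  have hspan : ⊤ ≤ Submodule.span ℂ (Set.range B) :=
    (hB.linearIndependent.span_eq_top_of_card_eq_finrank' (by simp)).ge
  refine ⟨OrthonormalBasis.mk hB hspan, fun i u => ?_⟩
  have h := inner_mulE_mulE_of_eigenvector (heig i) u
  rw [OrthonormalBasis.coe_mk, ← inner_conj_symm, ← inner_conj_symm (B i)]
  exact (congrArg _ h).trans (by rw [map_mul, Complex.conj_ofReal]; rfl)

end MatrixAction

section ThinSVD

variable {d n : ℕ}

/-- `M = U Σ V*` with `U` having orthonormal columns, `V` unitary and `Σ` the real diagonal matrix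
of `s`. Neither the order nor the sign of the `s i` is prescribed. -/
structure IsThinSVD (M U : Matrix (Fin d) (Fin n) ℂ) (V : Matrix (Fin n) (Fin n) ℂ)
    (s : Fin n → ℝ) : Prop where
  left_isometry : Uᴴ * U = 1
  right_isometry : Vᴴ * V = 1
  eq_mul : M = U * diagonal (fun i => (s i : ℂ)) * Vᴴ

namespace IsThinSVD

variable {M U : Matrix (Fin d) (Fin n) ℂ} {V P : Matrix (Fin n) (Fin n) ℂ} {s : Fin n → ℝ}

theorem norm_mulE (h : IsThinSVD M U V s) (u : EuclideanSpace ℂ (Fin n)) :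
    ‖mulE M u‖ = ‖mulE (diagonal fun i => (s i : ℂ)) (mulE Vᴴ u)‖ := by
  rw [h.eq_mul, Matrix.mul_assoc, mulE_mul, mulE_mul,
    norm_mulE_of_conjTranspose_mul_self h.left_isometry]

theorem norm_mulE_right_single (h : IsThinSVD M U V s) (i : Fin n) :
    ‖mulE M (mulE V (EuclideanSpace.single i 1))‖ = |s i| := by
  rw [h.norm_mulE, ← mulE_mul Vᴴ, h.right_isometry, mulE_one, mulE_diagonal_single, norm_smul,
    PiLp.norm_single, norm_one, mul_one, Complex.norm_real, Real.norm_eq_abs]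

theorem mul_norm_le_norm_mulE (h : IsThinSVD M U V s) {c : ℝ} (hc : 0 ≤ c) (hs : ∀ i, c ≤ s i)
    (u : EuclideanSpace ℂ (Fin n)) : c * ‖u‖ ≤ ‖mulE M u‖ := by
  have hV : Vᴴᴴ * Vᴴ = 1 := by
    rw [conjTranspose_conjTranspose, mul_eq_one_comm, h.right_isometry]
  rw [h.norm_mulE, ← norm_mulE_of_conjTranspose_mul_self hV u]
  refine le_of_sq_le_sq ?_ (norm_nonneg _)
  rw [mul_pow, EuclideanSpace.norm_sq_eq, EuclideanSpace.norm_sq_eq, Finset.mul_sum]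
  refine Finset.sum_le_sum fun i _ => ?_
  rw [mulE_diagonal_apply, norm_mul, Complex.norm_real, Real.norm_eq_abs, mul_pow, sq_abs]
  gcongr
  exact hs i

theorem pos_of_forall_mulE_eq_zero (h : IsThinSVD M U V s)
    (hM : ∀ u, mulE M u = 0 → u = 0) (hs : ∀ i, 0 ≤ s i) (i : Fin n) : 0 < s i := by
  refine (hs i).lt_of_ne' fun hi => ?_
  have hzero : mulE V (EuclideanSpace.single i 1) = 0 :=
    hM _ (norm_eq_zero.1 (by rw [h.norm_mulE_right_single, hi, abs_zero]))
  have hone := norm_mulE_of_conjTranspose_mul_self h.right_isometry (EuclideanSpace.single i 1)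
  simp [hzero] at hone

theorem gram_mul_preconditioner (h : IsThinSVD M U V s) (hs : ∀ i, s i ≠ 0)
    (hP : P = V * diagonal (fun i => (s i : ℂ)⁻¹)) : Mᴴ * M * (P * Pᴴ) = 1 := by
  have hdiag : diagonal (fun i => (s i : ℂ)) * diagonal (fun i => (s i : ℂ)⁻¹) = 1 := by
    rw [diagonal_mul_diagonal, ← diagonal_one]
    exact congrArg diagonal (funext fun i => mul_inv_cancel₀ (Complex.ofReal_ne_zero.2 (hs i)))
  have hMP : M * P = U := by
    rw [h.eq_mul, hP, Matrix.mul_assoc, ← Matrix.mul_assoc Vᴴ, h.right_isometry, Matrix.one_mul,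
      Matrix.mul_assoc, hdiag, Matrix.mul_one]
  have hUM : Uᴴ * M = diagonal (fun i => (s i : ℂ)) * Vᴴ := by
    rw [h.eq_mul, Matrix.mul_assoc, ← Matrix.mul_assoc, h.left_isometry, Matrix.one_mul]
  rw [mul_eq_one_comm]
  calc P * Pᴴ * (Mᴴ * M) = P * ((M * P)ᴴ * M) := by
        simp only [conjTranspose_mul, Matrix.mul_assoc]
    _ = V * (diagonal (fun i => (s i : ℂ)⁻¹) * diagonal (fun i => (s i : ℂ))) * Vᴴ := by
        rw [hMP, hUM, hP]
        simp only [Matrix.mul_assoc]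
    _ = 1 := by
        rw [mul_eq_one_comm.1 hdiag, Matrix.mul_one, mul_eq_one_comm, h.right_isometry]

theorem normalize_preconditioner_single (h : IsThinSVD M U V s)
    (hP : P = V * diagonal (fun i => (s i : ℂ)⁻¹)) {j : Fin n} (hj : 0 < s j) :
    ‖mulE P (EuclideanSpace.single j 1)‖⁻¹ • mulE P (EuclideanSpace.single j 1)
      = mulE V (EuclideanSpace.single j 1) := by
  have hPe : mulE P (EuclideanSpace.single j 1)
      = (s j)⁻¹ • mulE V (EuclideanSpace.single j 1) := by
    rw [hP, mulE_mul, mulE_diagonal_single, mulE_smul, ← Complex.ofReal_inv, Complex.coe_smul]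
  rw [hPe, norm_smul, norm_mulE_of_conjTranspose_mul_self h.right_isometry, Real.norm_eq_abs,
    abs_of_pos (inv_pos.2 hj), PiLp.norm_single, norm_one, mul_one, inv_inv,
    smul_inv_smul₀ hj.ne']

theorem norm_mulE_right_single_le (h : IsThinSVD M U V s) {j : Fin n} (hj : 0 ≤ s j)
    (hmin : ∀ i, s j ≤ s i) {u : EuclideanSpace ℂ (Fin n)} (hu : ‖u‖ = 1) :
    ‖mulE M (mulE V (EuclideanSpace.single j 1))‖ ≤ ‖mulE M u‖ := by
  simpa only [h.norm_mulE_right_single, abs_of_nonneg hj, hu, mul_one]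
    using h.mul_norm_le_norm_mulE hj hmin u

theorem isPreconditionedResidual {m : ℕ} (h : IsThinSVD M U V s) (hs : ∀ i, s i ≠ 0)
    (hP : P = V * diagonal (fun i => (s i : ℂ)⁻¹)) (A : Matrix (Fin m) (Fin n) ℂ)
    (x : EuclideanSpace ℂ (Fin n)) :
    IsPreconditionedResidual (toEuclideanLin A) (toEuclideanLin M) x
      (mulE P (mulE Pᴴ (mulE Aᴴ (mulE A x) - ((‖mulE A x‖ ^ 2 : ℝ) : ℂ) • x))) := by
  intro u
  change inner ℂ (mulE M u) (mulE M _) = inner ℂ (mulE A u) (mulE A x) - _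
  rw [inner_mulE_mulE, ← mulE_mul P, ← mulE_mul (Mᴴ * M), h.gram_mul_preconditioner hs hP,
    mulE_one, inner_sub_right, inner_smul_right, inner_mulE_mulE, mulE_mul]
  rfl

end IsThinSVD

end ThinSVD

theorem sq_le_sq_of_ne_last {n : ℕ} (hn : 2 ≤ n) {σ : Fin n → ℝ} (hσ : Antitone σ)
    (hσ₀ : ∀ i, 0 ≤ σ i) {i : Fin n} (hi : i ≠ ⟨n - 1, Nat.sub_one_lt_of_lt hn⟩) :
    σ ⟨n - 2, Nat.sub_lt_self two_pos hn⟩ ^ 2 ≤ σ i ^ 2 := by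
  refine pow_le_pow_left₀ (hσ₀ _) (hσ (Fin.le_def.2 ?_)) 2
  have := Fin.val_ne_of_ne hi
  dsimp only at this ⊢
  omega

theorem one_sub_mul_sub_pos_of_lt_div {gap η : ℝ} (hgap : 0 ≤ gap) (hη : η < gap / (2 + gap)) :
    0 < (1 - η) * gap - 2 * η := by
  rw [lt_div_iff₀ (by linarith)] at hη
  linarith

theorem sqrt_sin_sq_le_sqrt_tan_sq {c : ℝ} (hc₀ : 0 < c) (hc₁ : c ≤ 1) :
    √(1 - c) ≤ √((1 - c) / c) :=
  Real.sqrt_le_sqrt (le_div_self (sub_nonneg.2 hc₁) hc₀ hc₁)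

theorem rlobpcg_singular_vector_convergence_general
    {d m n : ℕ} (hn : 2 ≤ n)
    (A : Matrix (Fin m) (Fin n) ℂ)
    (σ : Fin n → ℝ) (hσ : HasSingularValues A σ) (hpos : ∀ i, 0 < σ i)
    (gap : ℝ)
    (hgap : gap = (σ ⟨n - 2, Nat.sub_lt_self two_pos hn⟩ ^ 2
      - σ ⟨n - 1, Nat.sub_one_lt_of_lt hn⟩ ^ 2) / σ ⟨n - 1, Nat.sub_one_lt_of_lt hn⟩ ^ 2)
    (S : Matrix (Fin d) (Fin m) ℂ) (η : ℝ) (hη0 : 0 ≤ η) (hη1 : η < 1)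
    (hS : IsSubspaceEmbedding S A η)
    (hηgap : η < gap / (2 + gap))
    (U : Matrix (Fin d) (Fin n) ℂ) (V : Matrix (Fin n) (Fin n) ℂ) (s : Fin n → ℝ)
    (hs0 : ∀ i, 0 ≤ s i) (hsa : Antitone s) (hSVD : IsThinSVD (S * A) U V s)
    (P : Matrix (Fin n) (Fin n) ℂ)
    (hP : P = V * Matrix.diagonal (fun i => ((s i : ℂ))⁻¹))
    (e : EuclideanSpace ℂ (Fin n))
    (he : e = EuclideanSpace.single ⟨n - 1, Nat.sub_one_lt_of_lt hn⟩ (1 : ℂ))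
    (v : ℕ → EuclideanSpace ℂ (Fin n))
    (hv0 : v 0 = ‖mulE P e‖⁻¹ • mulE P e)
    (w : ℕ → EuclideanSpace ℂ (Fin n))
    (hw : ∀ i : ℕ, w i = mulE P (mulE Pᴴ
      (mulE Aᴴ (mulE A (v i)) - ((‖mulE A (v i)‖ ^ 2 : ℝ) : ℂ) • v i)))
    (hunit : ∀ i : ℕ, ‖v i‖ = 1)
    (hmin : ∀ i : ℕ, ∀ z ∈
      Submodule.span ℂ ({v i, w i} : Set (EuclideanSpace ℂ (Fin n))),
      ‖z‖ = 1 → ‖mulE A (v (i + 1))‖ ≤ ‖mulE A z‖)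
    (vmin : EuclideanSpace ℂ (Fin n)) (hvmin1 : ‖vmin‖ = 1)
    (hvmin2 : mulE (Aᴴ * A) vmin = ((σ ⟨n - 1, Nat.sub_one_lt_of_lt hn⟩ ^ 2 : ℝ) : ℂ) • vmin)
    (C q : ℝ) (hC : C = 2 * η / ((1 - η) * gap - 2 * η))
    (hq : q = η + (1 - η) / (1 + gap))
    (sin2 tan2 : ℕ → ℝ)
    (hsin2 : ∀ k, sin2 k = 1 - ‖@inner ℂ _ _ (v k) vmin‖ ^ 2)
    (htan2 : ∀ k, tan2 k = sin2 k / (1 - sin2 k)) (k : ℕ) :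
    √(sin2 k) ≤ √(tan2 k) ∧ √(tan2 k) ≤ √C * q ^ k := by
  set j : Fin n := ⟨n - 1, Nat.sub_one_lt_of_lt hn⟩
  obtain ⟨b, hb⟩ := hσ.exists_isRightSingularBasis
  have hj : 0 < σ j ^ 2 := pow_pos (hpos j) 2
  have hl₂ : (1 + gap) * σ j ^ 2 = σ ⟨n - 2, Nat.sub_lt_self two_pos hn⟩ ^ 2 := by
    rw [hgap, one_add_mul, div_mul_cancel₀ _ hj.ne', add_sub_cancel]
  have hgap₀ : 0 ≤ gap := hgap ▸ div_nonneg (sub_nonneg.2 (pow_le_pow_left₀ (hσ.2.1 j)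
    (hσ.1 (Fin.le_def.2 (by dsimp only [j]; omega))) 2)) hj.le
  have hB : HasNormDistortion (toEuclideanLin A) (toEuclideanLin (S * A)) η := hS
  have hs : ∀ i, 0 < s i := hSVD.pos_of_forall_mulE_eq_zero (fun u hu =>
    (map_eq_zero_iff _ (hb.injective fun i => pow_pos (hpos i) 2)).1
      (hB.map_eq_zero_left hη1 hu)) hs0
  have hs_min (i : Fin n) : s j ≤ s i := hsa (Fin.le_def.2 (by dsimp only [j]; omega))
  have hv0' : v 0 = mulE V (EuclideanSpace.single j 1) := by
    rw [hv0, he, hSVD.normalize_preconditioner_single hP (hs j)]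
  obtain ⟨hcos, htan⟩ := hb.tan_sq_le hj (one_sub_mul_sub_pos_of_lt_div hgap₀ hηgap)
    (fun i hi => hl₂.trans_le (sq_le_sq_of_ne_last hn hσ.1 hσ.2.1 hi)) hB hη0 hη1 hunit
    (fun u hu => hv0' ▸ hSVD.norm_mulE_right_single_le (hs0 j) hs_min hu)
    (fun i => hw i ▸ hSVD.isPreconditionedResidual (fun i => (hs i).ne') hP A (v i)) hmin hvmin1
    (inner_mulE_mulE_of_eigenvector hvmin2) k
  have hcos_le : ‖inner ℂ (v k) vmin‖ ^ 2 ≤ 1 := pow_le_one₀ (norm_nonneg _)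
    ((norm_inner_le_norm _ _).trans_eq (by rw [hunit, hvmin1, one_mul]))
  have hq₀ : 0 ≤ q := hq ▸ add_nonneg hη0 (div_nonneg (sub_nonneg.2 hη1.le) (by linarith))
  rw [htan2, hsin2, sub_sub_cancel, hC, ← Real.sqrt_sq (pow_nonneg hq₀ k),
    ← Real.sqrt_mul' _ (sq_nonneg _), hq]
  exact ⟨sqrt_sin_sq_le_sqrt_tan_sq hcos hcos_le, Real.sqrt_le_sqrt htan⟩

/-- RLOBPCG convergence: singular vector bound, Theorem 1.2, eq. (1.6):
under the same setup as the singular value bound, with `v_min` a unit right singular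
vector for `σₙ`, for every `k`:
`|sin∠(v_k, v_min)| ≤ |tan∠(v_k, v_min)| ≤ √C · q^k`, where
`sin²∠ = 1 − |⟨v_k, v_min⟩|²` and `tan²∠ = sin²∠/(1 − sin²∠)`. -/
theorem rlobpcg_singular_vector_convergence
    {d m n : ℕ} (hn : 2 ≤ n)
    (A : Matrix (Fin m) (Fin n) ℂ)
    (hrank : Function.Injective (mulE A))
    (σ : Fin n → ℝ) (hσ : HasSingularValues A σ) (hpos : ∀ i, 0 < σ i)
    (gap : ℝ)
    (hgap : gap = (σ ⟨n - 2, by omega⟩ ^ 2 - σ ⟨n - 1, by omega⟩ ^ 2) / σ ⟨n - 1, by omega⟩ ^ 2)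
    (S : Matrix (Fin d) (Fin m) ℂ) (η : ℝ) (hη0 : 0 ≤ η) (hη1 : η < 1)
    (hS : IsSubspaceEmbedding S A η)
    (hηgap : η < gap / (2 + gap))
    (U : Matrix (Fin d) (Fin n) ℂ) (V : Matrix (Fin n) (Fin n) ℂ) (s : Fin n → ℝ)
    (hU : Uᴴ * U = 1) (hV : Vᴴ * V = 1) (hs0 : ∀ i, 0 ≤ s i) (hsa : Antitone s)
    (hSVD : S * A = U * Matrix.diagonal (fun i => (s i : ℂ)) * Vᴴ)
    (P : Matrix (Fin n) (Fin n) ℂ)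
    (hP : P = V * Matrix.diagonal (fun i => ((s i : ℂ))⁻¹))
    (e : EuclideanSpace ℂ (Fin n))
    (he : e = EuclideanSpace.single ⟨n - 1, by omega⟩ (1 : ℂ))
    (v : ℕ → EuclideanSpace ℂ (Fin n))
    (hv0 : v 0 = ‖mulE P e‖⁻¹ • mulE P e)
    (w : ℕ → EuclideanSpace ℂ (Fin n))
    (hw : ∀ i : ℕ, w i = mulE P (mulE Pᴴ
      (mulE Aᴴ (mulE A (v i)) - ((‖mulE A (v i)‖ ^ 2 : ℝ) : ℂ) • v i)))
    (hunit : ∀ i : ℕ, ‖v i‖ = 1)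
    (hmem : ∀ i : ℕ, v (i + 1) ∈
      Submodule.span ℂ ({v (i - 1), v i, w i} : Set (EuclideanSpace ℂ (Fin n))))
    (hmin : ∀ i : ℕ, ∀ z ∈
      Submodule.span ℂ ({v (i - 1), v i, w i} : Set (EuclideanSpace ℂ (Fin n))),
      ‖z‖ = 1 → ‖mulE A (v (i + 1))‖ ≤ ‖mulE A z‖)
    (vmin : EuclideanSpace ℂ (Fin n)) (hvmin1 : ‖vmin‖ = 1)
    (hvmin2 : mulE (Aᴴ * A) vmin = ((σ ⟨n - 1, by omega⟩ ^ 2 : ℝ) : ℂ) • vmin)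
    (C q : ℝ) (hC : C = 2 * η / ((1 - η) * gap - 2 * η))
    (hq : q = η + (1 - η) / (1 + gap))
    (sin2 tan2 : ℕ → ℝ)
    (hsin2 : ∀ k, sin2 k = 1 - ‖@inner ℂ _ _ (v k) vmin‖ ^ 2)
    (htan2 : ∀ k, tan2 k = sin2 k / (1 - sin2 k)) :
    ∀ k : ℕ, Real.sqrt (sin2 k) ≤ Real.sqrt (tan2 k) ∧
      Real.sqrt (tan2 k) ≤ Real.sqrt C * q ^ k := by
  exact rlobpcg_singular_vector_convergence_general hn A σ hσ hpos gap hgap S η hη0 hη1 hS hηgap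
    U V s hs0 hsa ⟨hU, hV, hSVD⟩ P hP e he v hv0 w hw hunit
    (fun i z hz => hmin i z (Submodule.span_mono (Set.subset_insert _ _) hz)) vmin hvmin1 hvmin2
    C q hC hq sin2 tan2 hsin2 htan2
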